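/- Let X and Y be n×n positive definite matrices with Tr(X) = 1, let H be an n×n contraction (H*H ≤ I), and let p > 0. Then S_H(X | Y) ≥ (1/p) Tr[H* X H · log(Y^{−p/2} X^p Y^{−p/2})] − Tr(X − Y) − log(1 + Tr(I − H H*)). -/

import Mathlib

open Matrix ComplexOrder

/-- Matrix logarithm of a (positive definite) Hermitian matrix, via functional calculus. -/
noncomputable def mlog {n : ℕ} (A : Matrix (Fin n) (Fin n) ℂ) : Matrix (Fin n) (Fin n) ℂ :=
  cfc Real.log A

/-- Matrix exponential of a Hermitian matrix, via functional calculus. -/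
noncomputable def mexp {n : ℕ} (A : Matrix (Fin n) (Fin n) ℂ) : Matrix (Fin n) (Fin n) ℂ :=
  cfc Real.exp A

/-- Real power of a (positive definite) Hermitian matrix, via functional calculus. -/
noncomputable def mpow {n : ℕ} (A : Matrix (Fin n) (Fin n) ℂ) (p : ℝ) : Matrix (Fin n) (Fin n) ℂ :=
  cfc (fun x : ℝ => x ^ p) A

/-- Deformed logarithm `log_q x = (x^(q-1) - 1)/(q-1)`. -/
noncomputable def logq (q x : ℝ) : ℝ := (x ^ (q - 1) - 1) / (q - 1)

/-- Deformed exponential `exp_q x = (1 + (q-1)x)^(1/(q-1))`, with `exp_1 = exp`. -/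
noncomputable def expq (q x : ℝ) : ℝ :=
  if q = 1 then Real.exp x else (1 + (q - 1) * x) ^ (1 / (q - 1))

/-- Deformed logarithm of a positive definite matrix, via functional calculus. -/
noncomputable def mlogq {n : ℕ} (q : ℝ) (A : Matrix (Fin n) (Fin n) ℂ) :
    Matrix (Fin n) (Fin n) ℂ :=
  cfc (logq q) A

/-- Deformed exponential of a Hermitian matrix, via functional calculus. -/
noncomputable def mexpq {m : ℕ} (q : ℝ) (A : Matrix (Fin m) (Fin m) ℂ) :
    Matrix (Fin m) (Fin m) ℂ :=
  cfc (expq q) A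

/-- Real part of the trace. -/
noncomputable def trRe {n : ℕ} (M : Matrix (Fin n) (Fin n) ℂ) : ℝ := (Matrix.trace M).re

/-- The reduced relative entropy `S_H(A | B) = Tr[A log A - H* A H log B - A + B]`. -/
noncomputable def SH {n : ℕ} (H A B : Matrix (Fin n) (Fin n) ℂ) : ℝ :=
  trRe (A * mlog A - Hᴴ * A * H * mlog B - A + B)

/-- The reduced Tsallis relative entropy
`S_{H,q}(A | B) = Tr[A^(2-q) log_q A - H* A^(2-q) H log_q B - A + B]`. -/
noncomputable def STq {n : ℕ} (H : Matrix (Fin n) (Fin n) ℂ) (q : ℝ)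
    (A B : Matrix (Fin n) (Fin n) ℂ) : ℝ :=
  trRe (mpow A (2 - q) * mlogq q A - Hᴴ * mpow A (2 - q) * H * mlogq q B - A + B)

/-!
Put `W = Y^(-p/2) X^p Y^(-p/2)` and `L = log Y + (1/p) log W`. Expanding `S_H`, one has to show that
`exp (Tr[H* X H L] - Tr[X log X]) ≤ 1 + Tr (1 - H H*)`.

In an orthonormal eigenbasis `u i` of `X`, Gibbs' variational principle bounds the left-hand side by
`∑ i, exp ⟨H* u i, L (H* u i)⟩`. The vectors `H* u i` have norm at most one, so Jensen's inequality
for the spectral measure of `L` at `H* u i`, completed to a probability measure by a mass at `0`,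
bounds this sum by `Tr (H e^L H*) + Tr (1 - H H*) ≤ Tr e^L + Tr (1 - H H*)`.

What remains is `Tr e^L ≤ Tr X`, a complementary Golden–Thompson inequality of Hiai and Petz. With
`A = log Y` and `B = (1/p) log W`, the path `K t = e^(tA/2) e^(tB) e^(tA/2)` satisfies `K p = X^p`.
By Poincaré separation, the determinant of a compression of a positive definite matrix to `k`
dimensions is at most the product of its `k` largest eigenvalues. If the columns of `V` are
eigenvectors of `K t` for its `k` largest eigenvalues, then compressing `K (2t)` to the range of
`e^(-tA/2) V` shows that the square of the product of those eigenvalues is at most the product of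
the `k` largest eigenvalues of `K (2t)`. Hence the sum of the logarithms of the `k` largest
eigenvalues of `K t`, divided by `t`, does not increase when `t` is halved. Compressing `K` to the
leading eigenvectors of `A + B`, where `log det` has derivative at `0` the sum of the `k` largest
eigenvalues of `A + B`, turns this into the weak majorization of the eigenvalues of `A + B` by those
of `(1/p) log (K p)`, and exponentiating gives `Tr e^(A+B) ≤ Tr (K p)^(1/p)`.
-/

section Spectral

variable {𝕜 ι : Type*} [RCLike 𝕜] [Fintype ι] [DecidableEq ι] {A : Matrix ι ι 𝕜}

/-- The squared moduli of the coordinates of `x` in the chosen orthonormal eigenbasis of `A`: the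
spectral measure of `A` in the state `x`, indexed like `Matrix.IsHermitian.eigenvalues`. -/
noncomputable def spectralWeight (hA : A.IsHermitian) (x : ι → 𝕜) (i : ι) : ℝ :=
  ‖((hA.eigenvectorUnitary : Matrix ι ι 𝕜)ᴴ *ᵥ x) i‖ ^ 2

lemma spectralWeight_nonneg (hA : A.IsHermitian) (x : ι → 𝕜) (i : ι) :
    0 ≤ spectralWeight hA x i :=
  sq_nonneg _

lemma eigenvectorUnitary_conjTranspose_mul_self (hA : A.IsHermitian) :
    (hA.eigenvectorUnitary : Matrix ι ι 𝕜)ᴴ * hA.eigenvectorUnitary = 1 :=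
  Unitary.coe_star_mul_self _

lemma cfc_eq_eigenvectorUnitary_mul (hA : A.IsHermitian) (f : ℝ → ℝ) :
    cfc f A = (hA.eigenvectorUnitary : Matrix ι ι 𝕜) *
      diagonal (fun i => (f (hA.eigenvalues i) : 𝕜)) *
        (hA.eigenvectorUnitary : Matrix ι ι 𝕜)ᴴ := by
  rw [hA.cfc_eq, IsHermitian.cfc, Unitary.conjStarAlgAut_apply]
  rfl

lemma continuousOn_real_spectrum (A : Matrix ι ι 𝕜) (f : ℝ → ℝ) :
    ContinuousOn f (spectrum ℝ A) :=
  finite_real_spectrum.continuousOn f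

open scoped MatrixOrder in
lemma posSemidef_cfc_exp (A : Matrix ι ι 𝕜) : (cfc Real.exp A).PosSemidef :=
  nonneg_iff_posSemidef.mp (cfc_nonneg fun x _ => Real.exp_nonneg x)

lemma star_dotProduct_cfc_mulVec (hA : A.IsHermitian) (f : ℝ → ℝ) (x : ι → 𝕜) :
    star x ⬝ᵥ cfc f A *ᵥ x =
      ((∑ i, spectralWeight hA x i * f (hA.eigenvalues i) : ℝ) : 𝕜) := by
  set U : Matrix ι ι 𝕜 := ↑hA.eigenvectorUnitary
  have hstar : star x ᵥ* U = star (Uᴴ *ᵥ x) := by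
    rw [star_mulVec, conjTranspose_conjTranspose]
  rw [cfc_eq_eigenvectorUnitary_mul hA, ← mulVec_mulVec, ← mulVec_mulVec, dotProduct_mulVec,
    hstar, dotProduct, RCLike.ofReal_sum]
  refine Finset.sum_congr rfl fun i _ => ?_
  rw [mulVec_diagonal, Pi.star_apply, spectralWeight, RCLike.ofReal_mul, RCLike.ofReal_pow,
    ← RCLike.conj_mul, RCLike.star_def]
  ring

lemma star_dotProduct_mulVec_eq_sum_spectralWeight (hA : A.IsHermitian) (x : ι → 𝕜) :
    star x ⬝ᵥ A *ᵥ x = ((∑ i, spectralWeight hA x i * hA.eigenvalues i : ℝ) : 𝕜) := by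
  simpa only [cfc_id' ℝ A hA.isSelfAdjoint] using star_dotProduct_cfc_mulVec hA (fun t => t) x

lemma star_dotProduct_self_eq_sum_spectralWeight (hA : A.IsHermitian) (x : ι → 𝕜) :
    star x ⬝ᵥ x = ((∑ i, spectralWeight hA x i : ℝ) : 𝕜) := by
  simpa only [cfc_const_one ℝ A hA.isSelfAdjoint, one_mulVec, mul_one] using
    star_dotProduct_cfc_mulVec hA (fun _ => 1) x

lemma trace_cfc_mul (hA : A.IsHermitian) (f : ℝ → ℝ) (M : Matrix ι ι 𝕜) :
    (cfc f A * M).trace = ∑ i, (f (hA.eigenvalues i) : 𝕜) *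
      (star ((hA.eigenvectorUnitary : Matrix ι ι 𝕜).col i) ⬝ᵥ
        M *ᵥ (hA.eigenvectorUnitary : Matrix ι ι 𝕜).col i) := by
  rw [cfc_eq_eigenvectorUnitary_mul hA, Matrix.mul_assoc, Matrix.mul_assoc, trace_mul_comm,
    Matrix.mul_assoc]
  refine Finset.sum_congr rfl fun i _ => ?_
  rw [diag_apply, diagonal_mul, mul_mul_apply]
  rfl

lemma trace_eq_sum_star_dotProduct_mulVec (hA : A.IsHermitian) (M : Matrix ι ι 𝕜) :
    M.trace = ∑ i, star ((hA.eigenvectorUnitary : Matrix ι ι 𝕜).col i) ⬝ᵥ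
      M *ᵥ (hA.eigenvectorUnitary : Matrix ι ι 𝕜).col i := by
  simpa only [cfc_const_one ℝ A hA.isSelfAdjoint, Matrix.one_mul, RCLike.ofReal_one, one_mul] using
    trace_cfc_mul hA (fun _ => 1) M

lemma trace_cfc (hA : A.IsHermitian) (f : ℝ → ℝ) :
    (cfc f A).trace = ((∑ i, f (hA.eigenvalues i) : ℝ) : 𝕜) := by
  rw [cfc_eq_eigenvectorUnitary_mul hA, trace_mul_comm, ← Matrix.mul_assoc,
    eigenvectorUnitary_conjTranspose_mul_self, Matrix.one_mul, trace_diagonal,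
    RCLike.ofReal_sum]

end Spectral

section Gibbs

lemma exp_sum_mul_sub_sum_mul_log_le {ι : Type*} [Fintype ι] {x : ι → ℝ}
    (hx : ∀ i, 0 < x i) (hsum : ∑ i, x i = 1) (k : ι → ℝ) :
    Real.exp (∑ i, x i * k i - ∑ i, x i * Real.log (x i)) ≤ ∑ i, Real.exp (k i) := by
  have hjensen := convexOn_exp.map_sum_le (t := Finset.univ) (w := x)
    (p := fun i => k i - Real.log (x i)) (fun i _ => (hx i).le) hsum (fun i _ => Set.mem_univ _)
  simpa only [smul_eq_mul, mul_sub, Finset.sum_sub_distrib, Real.exp_sub, Real.exp_log (hx _),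
    mul_div_cancel₀ _ (hx _).ne'] using hjensen

variable {𝕜 ι κ : Type*} [RCLike 𝕜] [Fintype ι] [Fintype κ]

lemma star_dotProduct_mul_mul_conjTranspose_mulVec (H : Matrix ι κ 𝕜) (M : Matrix κ κ 𝕜)
    (x : ι → 𝕜) :
    star x ⬝ᵥ (H * M * Hᴴ) *ᵥ x = star (Hᴴ *ᵥ x) ⬝ᵥ M *ᵥ (Hᴴ *ᵥ x) := by
  rw [star_mulVec, conjTranspose_conjTranspose, ← dotProduct_mulVec, mulVec_mulVec, mulVec_mulVec,
    Matrix.mul_assoc]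

lemma re_trace_mul_nonneg {P Q : Matrix ι ι 𝕜} (hP : P.PosSemidef) (hQ : Q.PosSemidef) :
    0 ≤ RCLike.re (P * Q).trace := by
  classical
  rw [← cfc_id' ℝ P hP.1.isSelfAdjoint, trace_cfc_mul hP.1, map_sum]
  refine Finset.sum_nonneg fun i _ => ?_
  rw [RCLike.re_ofReal_mul]
  exact mul_nonneg (hP.eigenvalues_nonneg i) (hQ.re_dotProduct_nonneg _)

variable [DecidableEq κ]

lemma re_trace_mul_mul_conjTranspose_le {P : Matrix κ κ 𝕜} {H : Matrix ι κ 𝕜}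
    (hP : P.PosSemidef) (hH : (1 - Hᴴ * H).PosSemidef) :
    RCLike.re (H * P * Hᴴ).trace ≤ RCLike.re P.trace := by
  have hdefect := re_trace_mul_nonneg hP hH
  rw [Matrix.mul_sub, Matrix.mul_one, trace_sub, map_sub, sub_nonneg, ← Matrix.mul_assoc,
    trace_mul_comm, ← Matrix.mul_assoc] at hdefect
  exact hdefect

variable [DecidableEq ι]

lemma posSemidef_one_sub_mul_conjTranspose {H : Matrix ι κ 𝕜} (hH : (1 - Hᴴ * H).PosSemidef) :
    (1 - H * Hᴴ).PosSemidef := by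
  have : Invertible (1 : Matrix ι ι 𝕜) := invertibleOne
  have : Invertible (1 : Matrix κ κ 𝕜) := invertibleOne
  have hcol := PosDef.fromBlocks₁₁ H (1 : Matrix κ κ 𝕜) (PosDef.one (n := ι))
  have hrow := PosDef.fromBlocks₂₂ (1 : Matrix ι ι 𝕜) H (PosDef.one (n := κ))
  simp only [inv_one, Matrix.mul_one] at hcol hrow
  exact hrow.mp (hcol.mpr hH)

lemma map_re_star_dotProduct_mulVec_le_of_convexOn {A : Matrix ι ι 𝕜} {f : ℝ → ℝ}
    (hf : ConvexOn ℝ Set.univ f) (hA : A.IsHermitian) {x : ι → 𝕜}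
    (hx : RCLike.re (star x ⬝ᵥ x) ≤ 1) :
    f (RCLike.re (star x ⬝ᵥ A *ᵥ x)) ≤
      RCLike.re (star x ⬝ᵥ cfc f A *ᵥ x) + (1 - RCLike.re (star x ⬝ᵥ x)) * f 0 := by
  rw [star_dotProduct_self_eq_sum_spectralWeight hA, RCLike.ofReal_re] at hx ⊢
  rw [star_dotProduct_mulVec_eq_sum_spectralWeight hA, star_dotProduct_cfc_mulVec hA]
  simp only [RCLike.ofReal_re]
  have hjensen := hf.map_add_sum_le (t := Finset.univ) (w := spectralWeight hA x)
    (p := hA.eigenvalues) (v := 1 - ∑ i, spectralWeight hA x i) (q := 0)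
    (fun i _ => spectralWeight_nonneg hA x i) (by ring) (fun i _ => Set.mem_univ _)
    (sub_nonneg.mpr hx) (Set.mem_univ _)
  simp only [smul_eq_mul, mul_zero, zero_add] at hjensen
  linarith

lemma sum_exp_re_star_dotProduct_le {X : Matrix ι ι 𝕜} {L : Matrix κ κ 𝕜} {H : Matrix ι κ 𝕜}
    (hX : X.IsHermitian) (hL : L.IsHermitian) (hH : (1 - H * Hᴴ).PosSemidef) :
    ∑ i, Real.exp (RCLike.re (star ((hX.eigenvectorUnitary : Matrix ι ι 𝕜).col i) ⬝ᵥ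
        (H * L * Hᴴ) *ᵥ (hX.eigenvectorUnitary : Matrix ι ι 𝕜).col i)) ≤
      RCLike.re (H * cfc Real.exp L * Hᴴ).trace + RCLike.re (1 - H * Hᴴ).trace := by
  rw [trace_eq_sum_star_dotProduct_mulVec hX (H * _ * Hᴴ),
    trace_eq_sum_star_dotProduct_mulVec hX (1 - _), map_sum, map_sum, ← Finset.sum_add_distrib]
  refine Finset.sum_le_sum fun i _ => ?_
  set u := (hX.eigenvectorUnitary : Matrix ι ι 𝕜).col i
  have hunit : star u ⬝ᵥ u = 1 :=
    (congrFun₂ (eigenvectorUnitary_conjTranspose_mul_self hX) i i).trans (one_apply_eq i)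
  have hdefect : star u ⬝ᵥ (1 - H * Hᴴ) *ᵥ u = 1 - star (Hᴴ *ᵥ u) ⬝ᵥ (Hᴴ *ᵥ u) := by
    rw [sub_mulVec, dotProduct_sub, one_mulVec, hunit]
    simpa only [Matrix.mul_one, one_mulVec] using
      congrArg (1 - ·) (star_dotProduct_mul_mul_conjTranspose_mulVec H 1 u)
  have hcontr := hH.re_dotProduct_nonneg u
  rw [hdefect, map_sub, RCLike.one_re, sub_nonneg] at hcontr
  rw [hdefect, map_sub, RCLike.one_re, star_dotProduct_mul_mul_conjTranspose_mulVec,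
    star_dotProduct_mul_mul_conjTranspose_mulVec]
  simpa only [Real.exp_zero, mul_one] using
    map_re_star_dotProduct_mulVec_le_of_convexOn convexOn_exp hL hcontr

lemma exp_re_trace_mul_sub_re_trace_mul_log_le {X : Matrix ι ι 𝕜} {L : Matrix κ κ 𝕜}
    {H : Matrix ι κ 𝕜} (hX : X.PosDef) (htr : X.trace = 1) (hL : L.IsHermitian)
    (hH : (1 - Hᴴ * H).PosSemidef) :
    Real.exp (RCLike.re (Hᴴ * X * H * L).trace - RCLike.re (X * cfc Real.log X).trace) ≤
      RCLike.re (cfc Real.exp L).trace + RCLike.re (1 - H * Hᴴ).trace := by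
  have hsum : ∑ i, hX.1.eigenvalues i = 1 := by
    exact_mod_cast hX.1.trace_eq_sum_eigenvalues.symm.trans htr
  have hcyclic : (Hᴴ * X * H * L).trace = (X * (H * L * Hᴴ)).trace := by
    simpa only [Matrix.mul_assoc] using trace_mul_comm Hᴴ (X * (H * L))
  have henergy := trace_cfc_mul hX.1 (fun t => t) (H * L * Hᴴ)
  have hentropy := trace_cfc hX.1 (fun t => t * Real.log t)
  rw [cfc_id' ℝ X hX.1.isSelfAdjoint] at henergy
  rw [cfc_mul (fun t => t) Real.log X continuousOn_id (continuousOn_real_spectrum X _),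
    cfc_id' ℝ X hX.1.isSelfAdjoint] at hentropy
  rw [hcyclic]
  simp only [henergy, hentropy, map_sum, RCLike.re_ofReal_mul, RCLike.ofReal_re]
  calc _ ≤ _ := exp_sum_mul_sub_sum_mul_log_le hX.eigenvalues_pos hsum _
    _ ≤ _ := sum_exp_re_star_dotProduct_le hX.1 hL (posSemidef_one_sub_mul_conjTranspose hH)
    _ ≤ _ := add_le_add_left (re_trace_mul_mul_conjTranspose_le (posSemidef_cfc_exp L) hH) _

end Gibbs

section PoincareSeparation

variable {𝕜 ι κ : Type*} [RCLike 𝕜] [Fintype ι] [DecidableEq ι] [Fintype κ] [DecidableEq κ]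
  {A : Matrix ι ι 𝕜}

/-- The enumeration of `ι` along which Mathlib defines `Matrix.IsHermitian.eigenvalues` from the
decreasing sequence `Matrix.IsHermitian.eigenvalues₀`. -/
noncomputable def sortedIndex (ι : Type*) [Fintype ι] : Fin (Fintype.card ι) ≃ ι :=
  Fintype.equivOfCardEq (Fintype.card_fin _)

lemma eigenvalues_sortedIndex (hA : A.IsHermitian) (i : Fin (Fintype.card ι)) :
    hA.eigenvalues (sortedIndex ι i) = hA.eigenvalues₀ i :=
  congrArg hA.eigenvalues₀ ((sortedIndex ι).symm_apply_apply i)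

lemma eigenvalues₀_pos (hA : A.PosDef) (i : Fin (Fintype.card ι)) : 0 < hA.1.eigenvalues₀ i :=
  eigenvalues_sortedIndex hA.1 i ▸ hA.eigenvalues_pos _

lemma mul_re_star_dotProduct_self_le (hA : A.IsHermitian) {x : ι → 𝕜} {c : ℝ}
    (h : ∀ i, c ≤ hA.eigenvalues i ∨ spectralWeight hA x i = 0) :
    c * RCLike.re (star x ⬝ᵥ x) ≤ RCLike.re (star x ⬝ᵥ A *ᵥ x) := by
  rw [star_dotProduct_self_eq_sum_spectralWeight hA,
    star_dotProduct_mulVec_eq_sum_spectralWeight hA, RCLike.ofReal_re, RCLike.ofReal_re,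
    mul_comm, Finset.sum_mul]
  refine Finset.sum_le_sum fun i _ => ?_
  rcases h i with hle | hzero
  · exact mul_le_mul_of_nonneg_left hle (spectralWeight_nonneg hA x i)
  · rw [hzero, zero_mul, zero_mul]

lemma re_star_dotProduct_mulVec_le_mul (hA : A.IsHermitian) {x : ι → 𝕜} {c : ℝ}
    (h : ∀ i, hA.eigenvalues i ≤ c ∨ spectralWeight hA x i = 0) :
    RCLike.re (star x ⬝ᵥ A *ᵥ x) ≤ c * RCLike.re (star x ⬝ᵥ x) := by
  rw [star_dotProduct_self_eq_sum_spectralWeight hA,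
    star_dotProduct_mulVec_eq_sum_spectralWeight hA, RCLike.ofReal_re, RCLike.ofReal_re,
    mul_comm c, Finset.sum_mul]
  refine Finset.sum_le_sum fun i _ => ?_
  rcases h i with hle | hzero
  · exact mul_le_mul_of_nonneg_left hle (spectralWeight_nonneg hA x i)
  · rw [hzero, zero_mul, zero_mul]

-- The conditions are `card κ - 1` linear equations in the `card κ` coordinates of `x`.
lemma exists_ne_zero_spectralWeight_eq_zero (hA : A.IsHermitian) {B : Matrix κ κ 𝕜}
    (hB : B.IsHermitian) (V : Matrix ι κ 𝕜) (h : Fintype.card κ ≤ Fintype.card ι)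
    (i : Fin (Fintype.card κ)) :
    ∃ x : κ → 𝕜, x ≠ 0 ∧ (∀ j, i < j → spectralWeight hB x (sortedIndex κ j) = 0) ∧
      ∀ j < i, spectralWeight hA (V *ᵥ x) (sortedIndex ι (Fin.castLE h j)) = 0 := by
  let E : Matrix {j : Fin (Fintype.card κ) // j ≠ i} κ 𝕜 := of fun j =>
    if j.1 < i then ((hA.eigenvectorUnitary : Matrix ι ι 𝕜)ᴴ * V)
        (sortedIndex ι (Fin.castLE h j))
      else (hB.eigenvectorUnitary : Matrix κ κ 𝕜)ᴴ (sortedIndex κ j)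
  have hrank : Module.finrank 𝕜 ({j : Fin (Fintype.card κ) // j ≠ i} → 𝕜) <
      Module.finrank 𝕜 (κ → 𝕜) := by
    rw [Module.finrank_fintype_fun_eq_card, Module.finrank_fintype_fun_eq_card]
    simpa using Fintype.card_subtype_lt (p := (· ≠ i)) (x := i) (by simp)
  obtain ⟨x, hx, hx0⟩ :=
    (Submodule.ne_bot_iff _).mp (LinearMap.ker_ne_bot_of_finrank_lt (f := E.mulVecLin) hrank)
  have hE : ∀ j, (E *ᵥ x) j = 0 := fun j => congrFun hx j
  refine ⟨x, hx0, fun j hj => ?_, fun j hj => ?_⟩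
  · have hj' := hE ⟨j, hj.ne'⟩
    simp only [E, mulVec, of_apply, hj.not_gt, if_false] at hj'
    rw [spectralWeight, mulVec, hj', norm_zero, zero_pow two_ne_zero]
  · have hj' := hE ⟨j, hj.ne⟩
    simp only [E, mulVec, of_apply, hj, if_true] at hj'
    rw [spectralWeight, mulVec_mulVec, mulVec, hj', norm_zero, zero_pow two_ne_zero]

lemma eigenvalues₀_conjTranspose_mul_mul_le (hA : A.IsHermitian) {V : Matrix ι κ 𝕜}
    (hV : Vᴴ * V = 1) (hB : (Vᴴ * A * V).IsHermitian) (h : Fintype.card κ ≤ Fintype.card ι)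
    (i : Fin (Fintype.card κ)) :
    hB.eigenvalues₀ i ≤ hA.eigenvalues₀ (Fin.castLE h i) := by
  obtain ⟨x, hx0, hxB, hxA⟩ := exists_ne_zero_spectralWeight_eq_zero hA hB V h i
  have hlower : hB.eigenvalues₀ i * RCLike.re (star x ⬝ᵥ x) ≤
      RCLike.re (star x ⬝ᵥ (Vᴴ * A * V) *ᵥ x) := by
    refine mul_re_star_dotProduct_self_le hB ((sortedIndex κ).forall_congr_right.mp fun j => ?_)
    rw [eigenvalues_sortedIndex]
    exact (le_or_gt j i).imp (fun hj => hB.eigenvalues₀_antitone hj) (hxB j)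
  have hupper : RCLike.re (star (V *ᵥ x) ⬝ᵥ A *ᵥ (V *ᵥ x)) ≤
      hA.eigenvalues₀ (Fin.castLE h i) * RCLike.re (star (V *ᵥ x) ⬝ᵥ (V *ᵥ x)) := by
    refine re_star_dotProduct_mulVec_le_mul hA ((sortedIndex ι).forall_congr_right.mp fun j => ?_)
    rw [eigenvalues_sortedIndex]
    exact (le_or_gt (Fin.castLE h i) j).imp (fun hj => hA.eigenvalues₀_antitone hj)
      fun hj => hxA ⟨j, (Fin.lt_def.mp hj).trans i.2⟩ hj
  have hform : star x ⬝ᵥ (Vᴴ * A * V) *ᵥ x = star (V *ᵥ x) ⬝ᵥ A *ᵥ (V *ᵥ x) := by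
    simpa only [conjTranspose_conjTranspose] using
      star_dotProduct_mul_mul_conjTranspose_mulVec Vᴴ A x
  have hnorm : star (V *ᵥ x) ⬝ᵥ (V *ᵥ x) = star x ⬝ᵥ x := by
    rw [star_mulVec, ← dotProduct_mulVec, mulVec_mulVec, hV, one_mulVec]
  have hpos : 0 < RCLike.re (star x ⬝ᵥ x) :=
    (RCLike.pos_iff.mp (dotProduct_star_self_pos_iff.mpr hx0)).1
  rw [hform] at hlower
  rw [hnorm] at hupper
  exact le_of_mul_le_mul_right (hlower.trans hupper) hpos

end PoincareSeparation

section LogMajorization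

variable {𝕜 ι : Type*} [RCLike 𝕜] [Fintype ι]

open scoped MatrixOrder in
lemma exists_isometry_mul_eq {m : Type*} [Fintype m] [DecidableEq m] {T : Matrix ι m 𝕜}
    (hT : (Tᴴ * T).PosDef) :
    ∃ (V : Matrix ι m 𝕜) (C : Matrix m m 𝕜), Vᴴ * V = 1 ∧ V * C = T := by
  obtain ⟨C, hC⟩ := CStarAlgebra.nonneg_iff_eq_star_mul_self.mp hT.posSemidef.nonneg
  rw [star_eq_conjTranspose] at hC
  have hdet : IsUnit C.det := by
    have hne := hT.det_pos.ne'
    rw [hC, det_mul] at hne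
    exact (right_ne_zero_of_mul hne).isUnit
  refine ⟨T * C⁻¹, C, ?_, nonsing_inv_mul_cancel_right C T hdet⟩
  calc (T * C⁻¹)ᴴ * (T * C⁻¹) = (C⁻¹)ᴴ * (Tᴴ * T) * C⁻¹ := by
        simp only [conjTranspose_mul, Matrix.mul_assoc]
    _ = (C * C⁻¹)ᴴ * (C * C⁻¹) := by
        rw [hC]
        simp only [conjTranspose_mul, Matrix.mul_assoc]
    _ = 1 := by rw [mul_nonsing_inv C hdet, conjTranspose_one, Matrix.one_mul]

variable [DecidableEq ι] {A : Matrix ι ι 𝕜} {k : ℕ}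

lemma det_conjTranspose_mul_mul_le_of_isometry (hA : A.PosDef) {V : Matrix ι (Fin k) 𝕜}
    (hV : Vᴴ * V = 1) (h : k ≤ Fintype.card ι) :
    (Vᴴ * A * V).det ≤ ((∏ i, hA.1.eigenvalues₀ (Fin.castLE h i) : ℝ) : 𝕜) := by
  have hB := hA.posSemidef.conjTranspose_mul_mul_same V
  have hcard := Fintype.card_fin k
  have hprod : ∏ j, hB.1.eigenvalues j =
      ∏ i : Fin k, hB.1.eigenvalues₀ (Fin.cast hcard.symm i) :=
    Fintype.prod_equiv ((sortedIndex (Fin k)).symm.trans (finCongr hcard)) _ _ fun _ => rfl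
  rw [hB.1.det_eq_prod_eigenvalues, ← RCLike.ofReal_prod, RCLike.ofReal_le_ofReal, hprod]
  refine Finset.prod_le_prod (fun i _ => ?_) fun i _ => ?_
  · rw [← eigenvalues_sortedIndex]
    exact hB.eigenvalues_nonneg _
  · exact eigenvalues₀_conjTranspose_mul_mul_le hA.1 hV hB.1 (hcard.trans_le h) _

lemma det_conjTranspose_mul_mul_le (hA : A.PosDef) {T : Matrix ι (Fin k) 𝕜}
    (hT : (Tᴴ * T).PosDef) (h : k ≤ Fintype.card ι) :
    (Tᴴ * A * T).det ≤
      ((∏ i, hA.1.eigenvalues₀ (Fin.castLE h i) : ℝ) : 𝕜) * (Tᴴ * T).det := by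
  obtain ⟨V, C, hV, rfl⟩ := exists_isometry_mul_eq hT
  have hgram : (V * C)ᴴ * (V * C) = Cᴴ * C := by
    rw [conjTranspose_mul, Matrix.mul_assoc, ← Matrix.mul_assoc Vᴴ, hV, Matrix.one_mul]
  have hcompr : ((V * C)ᴴ * A * (V * C)).det = (Vᴴ * A * V).det * ((V * C)ᴴ * (V * C)).det := by
    have hassoc : (V * C)ᴴ * A * (V * C) = Cᴴ * (Vᴴ * A * V) * C := by
      simp only [conjTranspose_mul, Matrix.mul_assoc]
    rw [hgram, hassoc, det_mul, det_mul, det_mul, mul_comm Cᴴ.det, mul_assoc]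
  rw [hcompr]
  exact mul_le_mul_of_nonneg_right (det_conjTranspose_mul_mul_le_of_isometry hA hV h)
    hT.det_pos.le

/-- The isometry whose columns are orthonormal eigenvectors of `A` for its `k` largest
eigenvalues. -/
noncomputable def topEigenvectors (hA : A.IsHermitian) (h : k ≤ Fintype.card ι) :
    Matrix ι (Fin k) 𝕜 :=
  (hA.eigenvectorUnitary : Matrix ι ι 𝕜).submatrix id fun i => sortedIndex ι (Fin.castLE h i)

lemma topEigenvectors_conjTranspose_mul_self (hA : A.IsHermitian) (h : k ≤ Fintype.card ι) :
    (topEigenvectors hA h)ᴴ * topEigenvectors hA h = 1 := by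
  have hinj : Function.Injective fun i : Fin k => sortedIndex ι (Fin.castLE h i) :=
    (sortedIndex ι).injective.comp (Fin.castLE_injective h)
  rw [topEigenvectors, conjTranspose_submatrix, ← submatrix_mul _ _ _ _ _ Function.bijective_id,
    eigenvectorUnitary_conjTranspose_mul_self, submatrix_one _ hinj]

lemma mul_topEigenvectors (hA : A.IsHermitian) (h : k ≤ Fintype.card ι) :
    A * topEigenvectors hA h = topEigenvectors hA h *
      diagonal fun i => (hA.eigenvalues₀ (Fin.castLE h i) : 𝕜) := by
  ext i j
  have hcol := congrFun (hA.mulVec_eigenvectorBasis (sortedIndex ι (Fin.castLE h j))) i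
  rw [mul_diagonal, mul_comm, ← eigenvalues_sortedIndex hA]
  rwa [Pi.smul_apply, RCLike.real_smul_eq_coe_mul] at hcol

lemma sq_prod_eigenvalues₀_le {R Q : Matrix ι ι 𝕜} (hR : R.PosDef) (hQ : Q.IsHermitian)
    (hM : (R * Q * R).IsHermitian) (hS : (R * R * (Q * Q) * (R * R)).PosDef)
    (h : k ≤ Fintype.card ι) :
    (∏ i : Fin k, hM.eigenvalues₀ (Fin.castLE h i)) ^ 2 ≤
      ∏ i : Fin k, hS.1.eigenvalues₀ (Fin.castLE h i) := by
  set V := topEigenvectors hM h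
  set D : Matrix (Fin k) (Fin k) 𝕜 := diagonal fun i => (hM.eigenvalues₀ (Fin.castLE h i) : 𝕜)
  set T := R⁻¹ * V
  have hRdet : IsUnit R.det := (isUnit_iff_isUnit_det R).mp hR.isUnit
  have hRT : R * T = V := mul_nonsing_inv_cancel_left R V hRdet
  have hT : (Tᴴ * T).PosDef := by
    refine PosDef.conjTranspose_mul_self T (Function.LeftInverse.injective
      (g := (Vᴴ * R).mulVec) fun x => ?_)
    rw [mulVec_mulVec, Matrix.mul_assoc, hRT, topEigenvectors_conjTranspose_mul_self, one_mulVec]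
  have hQRT : Q * (R * R) * T = T * D := by
    calc _ = R⁻¹ * (R * (Q * R * (R * T))) := by
          rw [nonsing_inv_mul_cancel_left R _ hRdet]
          simp only [Matrix.mul_assoc]
      _ = R⁻¹ * (R * Q * R * V) := by rw [hRT]; simp only [Matrix.mul_assoc]
      _ = _ := by rw [mul_topEigenvectors, ← Matrix.mul_assoc]
  have hcompr : Tᴴ * (R * R * (Q * Q) * (R * R)) * T = Dᴴ * (Tᴴ * T) * D := by
    calc _ = (Q * (R * R) * T)ᴴ * (Q * (R * R) * T) := by
          simp only [conjTranspose_mul, hR.1.eq, hQ.eq, Matrix.mul_assoc]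
      _ = _ := by rw [hQRT, conjTranspose_mul]; simp only [Matrix.mul_assoc]
  have hdet : (Dᴴ * (Tᴴ * T) * D).det =
      (((∏ i : Fin k, hM.eigenvalues₀ (Fin.castLE h i)) ^ 2 : ℝ) : 𝕜) * (Tᴴ * T).det := by
    rw [det_mul, det_mul, det_conjTranspose, det_diagonal, RCLike.ofReal_pow, RCLike.ofReal_prod,
      RCLike.star_def, map_prod]
    simp only [RCLike.conj_ofReal]
    ring
  have hle := det_conjTranspose_mul_mul_le hS hT h
  rw [hcompr, hdet] at hle
  exact RCLike.ofReal_le_ofReal.mp (le_of_mul_le_mul_right hle hT.det_pos)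

end LogMajorization

section Jacobi

variable {𝕜 R m : Type*} [Fintype m] [DecidableEq m]

lemma sum_det_updateRow [CommRing R] (A B : Matrix m m R) :
    ∑ i, (A.updateRow i (B i)).det = (A.adjugate * B).trace := by
  rw [trace_mul_comm]
  refine Finset.sum_congr rfl fun i _ => ?_
  rw [← cramer_transpose_apply, cramer_eq_adjugate_mulVec, ← adjugate_transpose, mulVec,
    dotProduct_comm]
  rfl

lemma hasDerivAt_det [NontriviallyNormedField 𝕜] [NormedCommRing R] [NormedAlgebra 𝕜 R]
    {K : 𝕜 → Matrix m m R} {K' : Matrix m m R} {t : 𝕜}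
    (hK : ∀ i j, HasDerivAt (fun s => K s i j) (K' i j) t) :
    HasDerivAt (fun s => (K s).det) ((K t).adjugate * K').trace t := by
  let D : ContinuousMultilinearMap 𝕜 (fun _ : m => m → R) R :=
    ⟨(detRowAlternating (n := m) (R := R)).toMultilinearMap.restrictScalars 𝕜,
      continuous_id.matrix_det⟩
  have hD := (D.hasFDerivAt (K t)).comp_hasDerivAt t
    (hasDerivAt_pi.mpr fun i => hasDerivAt_pi.mpr (hK i))
  exact hD.congr_deriv ((D.linearDeriv_apply _ _).trans (sum_det_updateRow (K t) K'))

end Jacobi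

section TrotterPath

variable {𝕜 ι : Type*} [RCLike 𝕜] [Fintype ι]

lemma posDef_mul_mul_self {R Q : Matrix ι ι 𝕜} (hR : R.PosDef) (hQ : Q.PosDef) :
    (R * Q * R).PosDef := by
  classical
  simpa only [hR.1.eq] using
    hQ.conjTranspose_mul_mul_same (mulVec_injective_of_isUnit hR.isUnit)

variable [DecidableEq ι] {A B : Matrix ι ι 𝕜} {k : ℕ}

/-- The symmetric Lie–Trotter product of `exp (t • A)` and `exp (t • B)`: a path of positive
definite matrices through `1` whose velocity there is `A + B`. -/
noncomputable def trotterPath (A B : Matrix ι ι 𝕜) (t : ℝ) : Matrix ι ι 𝕜 :=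
  NormedSpace.exp ((t / 2) • A) * NormedSpace.exp (t • B) * NormedSpace.exp ((t / 2) • A)

lemma exp_add_smul (A : Matrix ι ι 𝕜) (s t : ℝ) :
    NormedSpace.exp ((s + t) • A) = NormedSpace.exp (s • A) * NormedSpace.exp (t • A) := by
  rw [add_smul, exp_add_of_commute _ _ (((Commute.refl A).smul_left s).smul_right t)]

lemma posDef_exp (hA : A.IsHermitian) : (NormedSpace.exp A).PosDef := by
  have hR : (NormedSpace.exp ((2⁻¹ : ℝ) • A)).IsHermitian := (hA.smul (.all _)).exp
  have hsq : NormedSpace.exp A =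
      (NormedSpace.exp ((2⁻¹ : ℝ) • A))ᴴ * NormedSpace.exp ((2⁻¹ : ℝ) • A) := by
    rw [hR.eq, ← exp_add_smul]
    norm_num
  rw [hsq]
  exact PosDef.conjTranspose_mul_self _ (mulVec_injective_of_isUnit (isUnit_exp _))

lemma posDef_trotterPath (hA : A.IsHermitian) (hB : B.IsHermitian) (t : ℝ) :
    (trotterPath A B t).PosDef :=
  posDef_mul_mul_self (posDef_exp (hA.smul (.all _))) (posDef_exp (hB.smul (.all _)))

lemma trotterPath_zero (A B : Matrix ι ι 𝕜) : trotterPath A B 0 = 1 := by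
  simp [trotterPath]

lemma trotterPath_add_self (A B : Matrix ι ι 𝕜) (t : ℝ) :
    trotterPath A B (t + t) =
      NormedSpace.exp ((t / 2) • A) * NormedSpace.exp ((t / 2) • A) *
        (NormedSpace.exp (t • B) * NormedSpace.exp (t • B)) *
          (NormedSpace.exp ((t / 2) • A) * NormedSpace.exp ((t / 2) • A)) := by
  rw [trotterPath, add_div, exp_add_smul, exp_add_smul]

open scoped Matrix.Norms.Operator in
lemma hasDerivAt_trotterPath_zero (A B : Matrix ι ι 𝕜) (i j : ι) :
    HasDerivAt (fun t => trotterPath A B t i j) ((A + B) i j) 0 := by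
  have hexp (C : Matrix ι ι 𝕜) :
      HasDerivAt (fun t : ℝ => NormedSpace.exp (t • C)) C 0 := by
    simpa only [zero_smul, NormedSpace.exp_zero, Matrix.one_mul] using!
      hasDerivAt_exp_smul_const (𝕂 := ℝ) C 0
  have hhalf : HasDerivAt (fun t : ℝ => NormedSpace.exp ((t / 2) • A)) ((2⁻¹ : ℝ) • A) 0 := by
    simpa only [div_eq_mul_inv, mul_smul] using hexp ((2⁻¹ : ℝ) • A)
  have hpath : HasDerivAt (trotterPath A B) (A + B) 0 := by
    refine ((hhalf.mul (hexp B)).mul hhalf).congr_deriv ?_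
    simp only [Pi.mul_apply, zero_div, zero_smul, NormedSpace.exp_zero, Matrix.mul_one,
      Matrix.one_mul]
    rw [add_right_comm, ← add_smul]
    norm_num
  exact hasDerivAt_pi.mp (hasDerivAt_pi.mp hpath i) j

lemma sum_log_eigenvalues₀_trotterPath_half_le (hA : A.IsHermitian) (hB : B.IsHermitian)
    (h : k ≤ Fintype.card ι) (t : ℝ) :
    ∑ i : Fin k, Real.log ((posDef_trotterPath hA hB (t / 2)).1.eigenvalues₀ (Fin.castLE h i)) ≤
      (∑ i : Fin k, Real.log ((posDef_trotterPath hA hB t).1.eigenvalues₀ (Fin.castLE h i))) /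
        2 := by
  have hpos (s : ℝ) (i : Fin k) :
      0 < (posDef_trotterPath hA hB s).1.eigenvalues₀ (Fin.castLE h i) :=
    eigenvalues₀_pos (posDef_trotterPath hA hB s) _
  have hsq : (∏ i : Fin k, (posDef_trotterPath hA hB (t / 2)).1.eigenvalues₀ (Fin.castLE h i)) ^ 2
      ≤ ∏ i : Fin k, (posDef_trotterPath hA hB t).1.eigenvalues₀ (Fin.castLE h i) := by
    have hdouble := trotterPath_add_self A B (t / 2)
    rw [add_halves] at hdouble
    have hS := hdouble ▸ posDef_trotterPath hA hB t
    simp only [hdouble]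
    exact sq_prod_eigenvalues₀_le (posDef_exp (hA.smul (.all _))) (hB.smul (.all _)).exp
      (posDef_trotterPath hA hB (t / 2)).1 hS h
  have hlog := Real.log_le_log (pow_pos (Finset.prod_pos fun i _ => hpos _ i) 2) hsq
  rw [Real.log_pow, Real.log_prod fun i _ => (hpos _ i).ne',
    Real.log_prod fun i _ => (hpos _ i).ne'] at hlog
  rw [le_div_iff₀' two_pos]
  exact_mod_cast hlog

lemma sum_log_eigenvalues₀_trotterPath_div_two_pow_le (hA : A.IsHermitian) (hB : B.IsHermitian)
    (h : k ≤ Fintype.card ι) (t : ℝ) (m : ℕ) :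
    ∑ i : Fin k, Real.log
        ((posDef_trotterPath hA hB (t / 2 ^ m)).1.eigenvalues₀ (Fin.castLE h i)) ≤
      (∑ i : Fin k, Real.log ((posDef_trotterPath hA hB t).1.eigenvalues₀ (Fin.castLE h i))) /
        2 ^ m := by
  induction m with
  | zero => simp only [pow_zero, div_one, le_refl]
  | succ m ih =>
    have hhalf := sum_log_eigenvalues₀_trotterPath_half_le hA hB h (t / 2 ^ m)
    simp only [pow_succ, ← div_div]
    exact hhalf.trans (div_le_div_of_nonneg_right ih two_pos.le)

lemma hasDerivAt_log_det_compression {K : ℝ → Matrix ι ι 𝕜} {K' : Matrix ι ι 𝕜} {t : ℝ}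
    (hone : K t = 1) (hK : ∀ i j, HasDerivAt (fun s => K s i j) (K' i j) t)
    {V : Matrix ι (Fin k) 𝕜} (hV : Vᴴ * V = 1) :
    HasDerivAt (fun s => Real.log (RCLike.re (Vᴴ * K s * V).det))
      (RCLike.re (Vᴴ * K' * V).trace) t := by
  have hcompr : Vᴴ * K t * V = 1 := by rw [hone, Matrix.mul_one, hV]
  have hentry (i j) : HasDerivAt (fun s => (Vᴴ * K s * V) i j) ((Vᴴ * K' * V) i j) t := by
    simp only [Matrix.mul_apply]
    exact HasDerivAt.fun_sum fun l _ => (HasDerivAt.fun_sum fun m _ =>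
      (hK m l).const_mul _).mul_const _
  have hdet := (RCLike.reCLM (K := 𝕜)).hasFDerivAt.comp_hasDerivAt t (hasDerivAt_det hentry)
  have hlog := hdet.log (by simp [hcompr])
  simpa [hcompr] using hlog

lemma log_det_compression_le (hA : A.PosDef) {V : Matrix ι (Fin k) 𝕜} (hV : Vᴴ * V = 1)
    (h : k ≤ Fintype.card ι) :
    Real.log (RCLike.re (Vᴴ * A * V).det) ≤
      ∑ i : Fin k, Real.log (hA.1.eigenvalues₀ (Fin.castLE h i)) := by
  have hVinj : Function.Injective V.mulVec :=
    Function.LeftInverse.injective (g := Vᴴ.mulVec) fun x => by rw [mulVec_mulVec, hV, one_mulVec]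
  have hpos := (hA.conjTranspose_mul_mul_same hVinj).det_pos
  have hle := (RCLike.le_iff_re_im.mp (det_conjTranspose_mul_mul_le_of_isometry hA hV h)).1
  rw [RCLike.ofReal_re] at hle
  rw [← Real.log_prod fun i _ => (eigenvalues₀_pos hA _).ne']
  exact Real.log_le_log (RCLike.pos_iff.mp hpos).1 hle

lemma sum_eigenvalues₀_add_le (hA : A.IsHermitian) (hB : B.IsHermitian)
    (h : k ≤ Fintype.card ι) {t : ℝ} (ht : 0 < t) :
    ∑ i : Fin k, (hA.add hB).eigenvalues₀ (Fin.castLE h i) ≤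
      (∑ i : Fin k, Real.log
        ((posDef_trotterPath hA hB t).1.eigenvalues₀ (Fin.castLE h i))) / t := by
  set V := topEigenvectors (hA.add hB) h
  have hV : Vᴴ * V = 1 := topEigenvectors_conjTranspose_mul_self (hA.add hB) h
  have htrace : RCLike.re (Vᴴ * (A + B) * V).trace =
      ∑ i : Fin k, (hA.add hB).eigenvalues₀ (Fin.castLE h i) := by
    rw [Matrix.mul_assoc, mul_topEigenvectors, ← Matrix.mul_assoc, hV, Matrix.one_mul,
      trace_diagonal, map_sum]
    simp only [RCLike.ofReal_re]
  have hderiv := hasDerivAt_log_det_compression (trotterPath_zero A B)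
    (hasDerivAt_trotterPath_zero A B) hV
  have hseq : Filter.Tendsto (fun m : ℕ => t / 2 ^ m) Filter.atTop (nhdsWithin 0 {0}ᶜ) :=
    tendsto_nhdsWithin_iff.mpr
      ⟨tendsto_const_nhds.div_atTop (tendsto_pow_atTop_atTop_of_one_lt one_lt_two),
        Filter.Eventually.of_forall fun m => (by positivity : t / 2 ^ m ≠ 0)⟩
  rw [htrace, hasDerivAt_iff_tendsto_slope] at hderiv
  refine le_of_tendsto (hderiv.comp hseq) (Filter.Eventually.of_forall fun m => ?_)
  have hle := (log_det_compression_le (posDef_trotterPath hA hB (t / 2 ^ m)) hV h).trans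
    (sum_log_eigenvalues₀_trotterPath_div_two_pow_le hA hB h t m)
  simp only [Function.comp_apply, slope_def_field, trotterPath_zero, Matrix.mul_one, hV, det_one,
    RCLike.one_re, Real.log_one, sub_zero]
  rw [div_le_iff₀ (by positivity)]
  exact hle.trans_eq (by field_simp)

end TrotterPath

section Majorization

lemma sum_mul_le_last_mul_sum {R : Type*} [CommRing R] [PartialOrder R] [IsOrderedRing R] {n : ℕ}
    {w c : Fin (n + 1) → R} (hw : Antitone w)
    (hc : ∀ (k : ℕ) (hk : k ≤ n), ∑ i : Fin k, c (Fin.castLE (hk.trans n.le_succ) i) ≤ 0) :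
    ∑ i, w i * c i ≤ w (Fin.last n) * ∑ i, c i := by
  induction n with
  | zero => simp
  | succ n ih =>
    have hinit := ih (w := w ∘ Fin.castSucc) (c := c ∘ Fin.castSucc)
      (hw.comp_monotone (Fin.strictMono_castSucc).monotone)
      fun k hk => hc k (hk.trans n.le_succ)
    have hlast := mul_le_mul_of_nonpos_right
      (hw (Fin.le_last (Fin.last n).castSucc)) (hc (n + 1) le_rfl)
    rw [Fin.sum_univ_castSucc, Fin.sum_univ_castSucc c, mul_add]
    exact add_le_add_left (hinit.trans hlast) _

lemma sum_mul_nonpos_of_sum_castLE_nonpos {R : Type*} [CommRing R] [PartialOrder R]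
    [IsOrderedRing R] {n : ℕ} {w c : Fin n → R} (hw : Antitone w) (hw0 : ∀ i, 0 ≤ w i)
    (hc : ∀ (k : ℕ) (hk : k ≤ n), ∑ i : Fin k, c (Fin.castLE hk i) ≤ 0) :
    ∑ i, w i * c i ≤ 0 := by
  cases n with
  | zero => simp
  | succ n =>
    exact (sum_mul_le_last_mul_sum hw fun k hk => hc k (hk.trans n.le_succ)).trans
      (mul_nonpos_of_nonneg_of_nonpos (hw0 _) (hc (n + 1) le_rfl))

lemma sum_exp_le_sum_exp_of_sum_castLE_le {n : ℕ} {a b : Fin n → ℝ} (ha : Antitone a)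
    (h : ∀ (k : ℕ) (hk : k ≤ n),
      ∑ i : Fin k, a (Fin.castLE hk i) ≤ ∑ i : Fin k, b (Fin.castLE hk i)) :
    ∑ i, Real.exp (a i) ≤ ∑ i, Real.exp (b i) := by
  have hsum : ∑ i, Real.exp (a i) * (a i - b i) ≤ 0 :=
    sum_mul_nonpos_of_sum_castLE_nonpos (Real.exp_monotone.comp_antitone ha)
      (fun i => (Real.exp_pos _).le) fun k hk => by
        rw [Finset.sum_sub_distrib, sub_nonpos]
        exact h k hk
  have htangent (i : Fin n) : Real.exp (a i) - Real.exp (b i) ≤ Real.exp (a i) * (a i - b i) := by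
    have hexp := mul_le_mul_of_nonneg_left (Real.add_one_le_exp (b i - a i)) (Real.exp_pos (a i)).le
    rw [← Real.exp_add, add_sub_cancel] at hexp
    linarith
  rw [← sub_nonpos, ← Finset.sum_sub_distrib]
  exact (Finset.sum_le_sum fun i _ => htangent i).trans hsum

variable {𝕜 ι : Type*} [RCLike 𝕜] [Fintype ι] [DecidableEq ι] {A B : Matrix ι ι 𝕜}

lemma re_trace_cfc (hA : A.IsHermitian) (f : ℝ → ℝ) :
    RCLike.re (cfc f A).trace = ∑ i, f (hA.eigenvalues₀ i) := by
  rw [trace_cfc hA, RCLike.ofReal_re]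
  exact Fintype.sum_equiv (sortedIndex ι).symm _ _ fun _ => rfl

lemma re_trace_exp_add_le (hA : A.IsHermitian) (hB : B.IsHermitian) {p : ℝ} (hp : 0 < p) :
    RCLike.re (cfc Real.exp (A + B)).trace ≤
      RCLike.re (cfc (fun x : ℝ => x ^ (1 / p)) (trotterPath A B p)).trace := by
  have hK := posDef_trotterPath hA hB p
  rw [re_trace_cfc (hA.add hB), re_trace_cfc hK.1]
  simp only [Real.rpow_def_of_pos (eigenvalues₀_pos hK _), mul_one_div]
  refine sum_exp_le_sum_exp_of_sum_castLE_le (hA.add hB).eigenvalues₀_antitone fun k hk => ?_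
  rw [← Finset.sum_div]
  exact sum_eigenvalues₀_add_le hA hB hk hp

end Majorization

section PositiveDefinitePowers

variable {n : ℕ} {A X Y : Matrix (Fin n) (Fin n) ℂ}

lemma isHermitian_mlog (A : Matrix (Fin n) (Fin n) ℂ) : (mlog A).IsHermitian :=
  cfc_predicate (p := IsSelfAdjoint) Real.log A

open scoped Matrix.Norms.L2Operator in
lemma mlog_exp (hA : A.IsHermitian) : mlog (NormedSpace.exp A) = A :=
  CFC.log_exp A hA.isSelfAdjoint

open scoped Matrix.Norms.L2Operator in
lemma mpow_eq_exp (hA : A.PosDef) (s : ℝ) : mpow A s = NormedSpace.exp (s • mlog A) := by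
  rw [← CFC.real_exp_eq_normedSpace_exp ((isHermitian_mlog A).smul (.all s)).isSelfAdjoint, mlog,
    mpow, ← cfc_const_mul s Real.log A (continuousOn_real_spectrum A _),
    ← cfc_comp' Real.exp _ A Real.continuous_exp.continuousOn (continuousOn_real_spectrum A _)
      hA.1.isSelfAdjoint]
  refine cfc_congr fun x hx => ?_
  obtain ⟨i, rfl⟩ := hA.1.spectrum_real_eq_range_eigenvalues ▸ hx
  rw [Real.rpow_def_of_pos (hA.eigenvalues_pos i), mul_comm]

lemma mpow_one (hA : A.PosDef) : mpow A 1 = A := by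
  simp only [mpow, Real.rpow_one]
  exact cfc_id' ℝ A hA.1.isSelfAdjoint

lemma posDef_mpow (hA : A.PosDef) (s : ℝ) : (mpow A s).PosDef :=
  mpow_eq_exp hA s ▸ posDef_exp ((isHermitian_mlog A).smul (.all s))

lemma mpow_mpow (hA : A.PosDef) (s t : ℝ) : mpow (mpow A s) t = mpow A (t * s) := by
  rw [mpow_eq_exp (posDef_mpow hA s), mpow_eq_exp hA, mpow_eq_exp hA,
    mlog_exp ((isHermitian_mlog A).smul (.all s)), smul_smul]

lemma mpow_mul_mpow_neg (hA : A.PosDef) (s : ℝ) : mpow A s * mpow A (-s) = 1 := by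
  rw [mpow_eq_exp hA, mpow_eq_exp hA, ← exp_add_smul, add_neg_cancel, zero_smul,
    NormedSpace.exp_zero]

lemma trotterPath_mlog_mlog (hY : Y.PosDef) (hA : A.PosDef) {p : ℝ} (hp : p ≠ 0) :
    trotterPath (mlog Y) ((1 / p) • mlog A) p = mpow Y (p / 2) * A * mpow Y (p / 2) := by
  rw [trotterPath, smul_smul, mul_one_div_cancel hp, ← mpow_eq_exp hY, ← mpow_eq_exp hA,
    mpow_one hA]

lemma trRe_mexp_mlog_add_mlog_le (hX : X.PosDef) (hY : Y.PosDef) {p : ℝ} (hp : 0 < p) :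
    trRe (mexp (mlog Y +
      (1 / p) • mlog (mpow Y (-(p / 2)) * mpow X p * mpow Y (-(p / 2))))) ≤ trRe X := by
  set W := mpow Y (-(p / 2)) * mpow X p * mpow Y (-(p / 2))
  have hW : W.PosDef := posDef_mul_mul_self (posDef_mpow hY _) (posDef_mpow hX p)
  have hpath : trotterPath (mlog Y) ((1 / p) • mlog W) p = mpow X p := by
    have hinv := mpow_mul_mpow_neg hY (p / 2)
    calc _ = mpow Y (p / 2) * W * mpow Y (p / 2) := trotterPath_mlog_mlog hY hW hp.ne'
      _ = mpow Y (p / 2) * mpow Y (-(p / 2)) * mpow X p *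
          (mpow Y (-(p / 2)) * mpow Y (p / 2)) := by simp only [W, Matrix.mul_assoc]
      _ = mpow X p := by rw [hinv, mul_eq_one_comm.mp hinv, Matrix.one_mul, Matrix.mul_one]
  have hroot : mpow (mpow X p) (1 / p) = X := by
    rw [mpow_mpow hX, one_div_mul_cancel hp.ne', mpow_one hX]
  have hGT := re_trace_exp_add_le (isHermitian_mlog Y) ((isHermitian_mlog W).smul (.all (1 / p))) hp
  rw [hpath] at hGT
  exact hGT.trans_eq (congrArg trRe hroot)

end PositiveDefinitePowers

lemma SH_eq_trRe {n : ℕ} (H X Y : Matrix (Fin n) (Fin n) ℂ) :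
    SH H X Y = trRe (X * mlog X) - trRe (Hᴴ * X * H * mlog Y) - trRe (X - Y) := by
  simp only [SH, trRe, trace_add, trace_sub, Complex.add_re, Complex.sub_re]
  ring

/-- Lower bound for the reduced relative entropy. -/
theorem stmt3 {n : ℕ} (X Y H : Matrix (Fin n) (Fin n) ℂ)
    (hX : X.PosDef) (hY : Y.PosDef) (hTr : Matrix.trace X = 1)
    (hH : (1 - Hᴴ * H).PosSemidef) (p : ℝ) (hp : 0 < p) :
    SH H X Y ≥
      (1 / p) * trRe (Hᴴ * X * H * mlog (mpow Y (-(p / 2)) * mpow X p * mpow Y (-(p / 2))))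
        - trRe (X - Y) - Real.log (1 + trRe (1 - H * Hᴴ)) := by
  have hGT := trRe_mexp_mlog_add_mlog_le hX hY hp
  set W := mpow Y (-(p / 2)) * mpow X p * mpow Y (-(p / 2))
  have hL : (mlog Y + (1 / p) • mlog W).IsHermitian :=
    (isHermitian_mlog Y).add ((isHermitian_mlog W).smul (.all (1 / p)))
  have hgibbs : Real.exp (trRe (Hᴴ * X * H * (mlog Y + (1 / p) • mlog W)) - trRe (X * mlog X)) ≤
      1 + trRe (1 - H * Hᴴ) :=
    calc _ ≤ trRe (mexp (mlog Y + (1 / p) • mlog W)) + trRe (1 - H * Hᴴ) :=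
          exp_re_trace_mul_sub_re_trace_mul_log_le hX hTr hL hH
      _ ≤ trRe X + trRe (1 - H * Hᴴ) := add_le_add_left hGT _
      _ = _ := by rw [trRe, hTr, Complex.one_re]
  have hlog := (Real.le_log_iff_exp_le ((Real.exp_pos _).trans_le hgibbs)).mpr hgibbs
  have hlinear : trRe (Hᴴ * X * H * (mlog Y + (1 / p) • mlog W)) =
      trRe (Hᴴ * X * H * mlog Y) + (1 / p) * trRe (Hᴴ * X * H * mlog W) := by
    rw [trRe, Matrix.mul_add, Matrix.mul_smul, trace_add, trace_smul, Complex.add_re,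
      Complex.smul_re, smul_eq_mul]
    rfl
  rw [SH_eq_trRe]
  linarith
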